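/- arXiv:1208.4312 — 2 statements merged into one kernel-verified Lean document; each statement's English description precedes it below -/
import Mathlib

section
/- Fix integers n ≥ 2 and k ≥ 3, and set γ_k := 1/2 − 1/k and μ_k := k/2 − 1. Let A₁ > 0 and define Z₁(u) := A₁ u^{−2}(1 − u²)^{1+2γ_k} for u ∈ (0,1). Then there exist a function ζ : (0,1) → ℝ, a constant B₁ > 0, and a constant A₂^min < ∞, all depending only on n, k, A₁, such that for every A₂ ≥ A₂^min there exists a time τ₁ (depending only on n, k, A₁, A₂) so that the functions z_±(u,τ) := e^{−2γ_k τ} Z₁(u) ± A₂ e^{−4γ_k τ} ζ(u) satisfy D_u[z₊] ≥ 0 (supersolution) and D_u[z₋] ≤ 0 (subsolution) at every point (u,τ) of the space-time region B₁ √(A₂/A₁) e^{−γ_k τ} ≤ u ≤ 1 − B₁ (A₂/A₁)^{k/2} e^{−μ_k τ}, τ ≥ τ₁. -/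
open Topology Filter Asymptotics Set

/-- `γ_k = 1/2 - 1/k`. -/
noncomputable def gam (k : ℕ) : ℝ := 1/2 - 1/(k:ℝ)

/-- `μ_k = k/2 - 1`. -/
noncomputable def mu (k : ℕ) : ℝ := (k:ℝ)/2 - 1

/-- The quadratic operator `Q_u[Z] = Z Z'' - (1/2)(Z')² - Z Z'/u - 2(n-1)Z²/u²`
applied to a function of `u` alone. -/
noncomputable def Qop (n : ℕ) (Z : ℝ → ℝ) (u : ℝ) : ℝ :=
  Z u * deriv (deriv Z) u - (1/2) * (deriv Z u)^2
    - Z u * deriv Z u / u - 2 * ((n:ℝ) - 1) * (Z u)^2 / u^2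

/-- The parabolic operator
`D_u[z] = z_τ - (1/2)(u⁻¹ - u) z_u - u⁻² z - Q_u[z]/(2(n-1))`
applied to `z = z(u,τ)`. -/
noncomputable def Dop (n : ℕ) (z : ℝ → ℝ → ℝ) (u τ : ℝ) : ℝ :=
  deriv (z u) τ - (1/2) * (u⁻¹ - u) * deriv (fun x => z x τ) u
    - z u τ / u^2 - Qop n (fun x => z x τ) u / (2 * ((n:ℝ) - 1))

/-- `Z₁(u) = A₁ u⁻² (1-u²)^{1+2γ_k}`. -/
noncomputable def Z1 (k : ℕ) (A₁ : ℝ) (u : ℝ) : ℝ :=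
  A₁ * u ^ (-2:ℝ) * (1 - u^2) ^ (1 + 2 * gam k)

/-!
The linear part of `D_u` maps the weighted monomial `P p q = u ^ p (1 - u²) ^ q` to a combination of
`P p q` and `P (p - 2) q`, and it annihilates `e^{-2γτ} Z₁`. Adding `c e^{-4γτ} ζ` with
`ζ = P (-4) (1 + 4γ) - P (-2) (4γ)` changes its value to `c e^{-4γτ}` times
`P (-6) (2 + 4γ) + P (-2) (4γ) ≥ ½ P (-6) (4γ)`.

Each derivative of a weighted monomial costs at most a factor `1 / r` with `r = u (1 - u²)`, so the
quadratic term `Q_u` is bounded by the square of `size / r`. In the given region the correction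
does not exceed the main term `e^{-2γτ} Z₁` in size (up to constants), and there `(size / r)²` is a
constant times `A₁² e^{-4γτ} P (-6) (4γ)`. Hence the sign of `D_u` is that of `c` as soon as `|c|`
is large compared with `A₁²`.
-/

section Profile

/-- The weighted monomial `u ^ p * (1 - u ^ 2) ^ q`. On `(0,1)` the span of these functions is
stable under differentiation and contains both `Z₁` and the corrector `ζ`. -/
noncomputable def profile (p q u : ℝ) : ℝ := u ^ p * (1 - u ^ 2) ^ q

variable {p q p' q' u : ℝ}

lemma one_sub_sq_pos (hu : u ∈ Ioo (0 : ℝ) 1) : 0 < 1 - u ^ 2 := by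
  nlinarith [hu.1, hu.2]

lemma profile_pos (hu : u ∈ Ioo (0 : ℝ) 1) : 0 < profile p q u :=
  mul_pos (Real.rpow_pos_of_pos hu.1 p) (Real.rpow_pos_of_pos (one_sub_sq_pos hu) q)

lemma profile_add (hu : u ∈ Ioo (0 : ℝ) 1) :
    profile (p + p') (q + q') u = profile p q u * profile p' q' u := by
  simp only [profile, Real.rpow_add hu.1, Real.rpow_add (one_sub_sq_pos hu)]
  ring

lemma profile_add_natCast (hu : u ∈ Ioo (0 : ℝ) 1) (i j : ℕ) :
    profile (p + i) (q + j) u = profile p q u * (u ^ i * (1 - u ^ 2) ^ j) := by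
  rw [profile_add hu]
  simp only [profile, Real.rpow_natCast]

lemma profile_anti (hu : u ∈ Ioo (0 : ℝ) 1) (hp : p' ≤ p) (hq : q' ≤ q) :
    profile p q u ≤ profile p' q' u := by
  have hv := one_sub_sq_pos hu
  have hv1 : 1 - u ^ 2 ≤ 1 := sub_le_self 1 (sq_nonneg u)
  exact mul_le_mul (Real.rpow_le_rpow_of_exponent_ge hu.1 hu.2.le hp)
    (Real.rpow_le_rpow_of_exponent_ge hv hv1 hq) (by positivity)
    (Real.rpow_nonneg hu.1.le p')

lemma profile_sub_one (hu : u ∈ Ioo (0 : ℝ) 1) :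
    profile (p - 1) (q - 1) u = profile p q u / (u * (1 - u ^ 2)) := by
  simp only [profile, Real.rpow_sub_one hu.1.ne', Real.rpow_sub_one (one_sub_sq_pos hu).ne']
  exact div_mul_div_comm _ _ _ _

lemma hasDerivAt_profile (hu : u ∈ Ioo (0 : ℝ) 1) :
    HasDerivAt (profile p q)
      (p * profile (p - 1) q u - 2 * q * profile (p + 1) (q - 1) u) u := by
  have hbase : HasDerivAt (fun x : ℝ ↦ 1 - x ^ 2) (-(2 * u)) u := by
    simpa using (hasDerivAt_pow 2 u).const_sub 1
  have hmul := (Real.hasDerivAt_rpow_const (p := p) (Or.inl hu.1.ne')).mul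
    (hbase.rpow_const (p := q) (Or.inl (one_sub_sq_pos hu).ne'))
  refine hmul.congr_deriv ?_
  simp only [profile, Real.rpow_add hu.1, Real.rpow_one]
  ring

lemma differentiableAt_profile (hu : u ∈ Ioo (0 : ℝ) 1) :
    DifferentiableAt ℝ (profile p q) u :=
  (hasDerivAt_profile hu).differentiableAt

lemma contDiffAt_profile {m : WithTop ℕ∞} (hu : u ∈ Ioo (0 : ℝ) 1) :
    ContDiffAt ℝ m (profile p q) u :=
  (contDiffAt_id.rpow_const_of_ne hu.1.ne').mul
    ((contDiffAt_const.sub (contDiffAt_id.pow 2)).rpow_const_of_ne (one_sub_sq_pos hu).ne')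

end Profile

section Quadratic

variable {n : ℕ}

lemma one_le_natCast_sub_one (hn : 2 ≤ n) : (1 : ℝ) ≤ n - 1 := by
  have : (2 : ℝ) ≤ n := by exact_mod_cast hn
  linarith

lemma Qop_div_eq (hn : 2 ≤ n) (f : ℝ → ℝ) (u : ℝ) :
    Qop n f u / (2 * ((n : ℝ) - 1)) =
      (f u * deriv (deriv f) u - 1 / 2 * deriv f u ^ 2 - deriv f u * (f u / u))
        / (2 * ((n : ℝ) - 1)) - (f u / u) ^ 2 := by
  have hm : (n : ℝ) - 1 ≠ 0 := (zero_lt_one.trans_le (one_le_natCast_sub_one hn)).ne'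
  rw [Qop]
  field_simp

end Quadratic

section JetBound

/-- `f` is of class `C^m` at `u`, of size at most `S` at length scale `r`: its derivative of order
`i ≤ m` at `u` is at most `S / r ^ i`. -/
structure JetBoundAt (m : ℕ) (f : ℝ → ℝ) (r S u : ℝ) : Prop where
  contDiffAt : ContDiffAt ℝ m f u
  abs_iteratedDeriv_le : ∀ i ≤ m, |iteratedDeriv i f u| ≤ S / r ^ i

namespace JetBoundAt

variable {m : ℕ} {f g : ℝ → ℝ} {r S T u : ℝ}

lemma abs_le (hf : JetBoundAt m f r S u) : |f u| ≤ S := by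
  simpa using hf.abs_iteratedDeriv_le 0 m.zero_le

lemma mono (hf : JetBoundAt m f r S u) (hr : 0 ≤ r) (hST : S ≤ T) : JetBoundAt m f r T u where
  contDiffAt := hf.contDiffAt
  abs_iteratedDeriv_le i hi := (hf.abs_iteratedDeriv_le i hi).trans (by gcongr)

lemma congr (hf : JetBoundAt m f r S u) (hfg : g =ᶠ[𝓝 u] f) : JetBoundAt m g r S u where
  contDiffAt := hf.contDiffAt.congr_of_eventuallyEq hfg
  abs_iteratedDeriv_le i hi := hfg.iteratedDeriv_eq i ▸ hf.abs_iteratedDeriv_le i hi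

lemma add (hf : JetBoundAt m f r S u) (hg : JetBoundAt m g r T u) :
    JetBoundAt m (fun x ↦ f x + g x) r (S + T) u where
  contDiffAt := hf.contDiffAt.add hg.contDiffAt
  abs_iteratedDeriv_le i hi := by
    have hi' : (i : WithTop ℕ∞) ≤ m := by exact_mod_cast hi
    rw [iteratedDeriv_fun_add (hf.contDiffAt.of_le hi') (hg.contDiffAt.of_le hi'), add_div]
    exact (abs_add_le _ _).trans
      (add_le_add (hf.abs_iteratedDeriv_le i hi) (hg.abs_iteratedDeriv_le i hi))

lemma const_mul (hf : JetBoundAt m f r S u) (c : ℝ) :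
    JetBoundAt m (fun x ↦ c * f x) r (|c| * S) u where
  contDiffAt := contDiffAt_const.mul hf.contDiffAt
  abs_iteratedDeriv_le i hi := by
    rw [iteratedDeriv_const_mul_field, abs_mul, mul_div_assoc]
    gcongr
    exact hf.abs_iteratedDeriv_le i hi

lemma sub (hf : JetBoundAt m f r S u) (hg : JetBoundAt m g r T u) :
    JetBoundAt m (fun x ↦ f x - g x) r (S + T) u := by
  simpa [sub_eq_add_neg] using hf.add (hg.const_mul (-1))

lemma of_deriv (hf : ContDiffAt ℝ (m + 1 : ℕ) f u) (hS : |f u| ≤ S)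
    (hf' : JetBoundAt m (deriv f) r (S / r) u) : JetBoundAt (m + 1) f r S u where
  contDiffAt := hf
  abs_iteratedDeriv_le
    | 0, _ => by simpa using hS
    | i + 1, hi => by
      rw [iteratedDeriv_succ', pow_succ', ← div_div]
      exact hf'.abs_iteratedDeriv_le i (Nat.le_of_succ_le_succ hi)

lemma abs_Qop_div_le {n : ℕ} (hn : 2 ≤ n) (hf : JetBoundAt 2 f r S u) (hr : 0 < r)
    (hru : r ≤ u) : |Qop n f u / (2 * ((n : ℝ) - 1))| ≤ 9 / 4 * (S / r) ^ 2 := by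
  have hu : 0 < u := hr.trans_le hru
  have hS : 0 ≤ S := (abs_nonneg _).trans hf.abs_le
  have hf' : |deriv f u| ≤ S / r := by
    simpa using hf.abs_iteratedDeriv_le 1 one_le_two
  have hf'' : |deriv (deriv f) u| ≤ S / r ^ 2 := by
    simpa only [iteratedDeriv_succ', iteratedDeriv_zero] using hf.abs_iteratedDeriv_le 2 le_rfl
  have hquot : |f u / u| ≤ S / r := by
    rw [abs_div, abs_of_pos hu]
    exact div_le_div₀ hS hf.abs_le hr hru
  have hsecond : |f u * deriv (deriv f) u| ≤ (S / r) ^ 2 := by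
    rw [abs_mul]
    calc |f u| * |deriv (deriv f) u| ≤ S * (S / r ^ 2) := by gcongr; exact hf.abs_le
      _ = (S / r) ^ 2 := by ring
  have hfirst : |deriv f u * (f u / u)| ≤ (S / r) ^ 2 := by
    rw [abs_mul, sq]
    gcongr
  have hquot_sq : (f u / u) ^ 2 ≤ (S / r) ^ 2 :=
    sq_le_sq' (neg_le_of_abs_le hquot) (le_of_abs_le hquot)
  have hderiv_sq : (deriv f u) ^ 2 ≤ (S / r) ^ 2 :=
    sq_le_sq' (neg_le_of_abs_le hf') (le_of_abs_le hf')
  have hm := one_le_natCast_sub_one hn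
  have hnumerator : |f u * deriv (deriv f) u - 1 / 2 * deriv f u ^ 2 - deriv f u * (f u / u)| ≤
      5 / 2 * (S / r) ^ 2 := by
    rw [_root_.abs_le] at hsecond hfirst ⊢
    constructor <;> linarith [sq_nonneg (deriv f u)]
  have hderiv_part :
      |(f u * deriv (deriv f) u - 1 / 2 * deriv f u ^ 2 - deriv f u * (f u / u))
        / (2 * ((n : ℝ) - 1))| ≤ 5 / 2 * (S / r) ^ 2 / 2 := by
    rw [abs_div, abs_of_pos (by positivity : (0 : ℝ) < 2 * (n - 1))]
    gcongr
    linarith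
  calc |Qop n f u / (2 * ((n : ℝ) - 1))| ≤ 5 / 2 * (S / r) ^ 2 / 2 + (S / r) ^ 2 := by
        rw [Qop_div_eq hn]
        refine (abs_sub _ _).trans (add_le_add hderiv_part ?_)
        rwa [abs_of_nonneg (sq_nonneg _)]
    _ = 9 / 4 * (S / r) ^ 2 := by ring

end JetBoundAt

lemma exists_jetBoundAt_profile (m : ℕ) (p q : ℝ) :
    ∃ C > 0, ∀ u ∈ Ioo (0 : ℝ) 1,
      JetBoundAt m (profile p q) (u * (1 - u ^ 2)) (C * profile p q u) u := by
  induction m generalizing p q with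
  | zero =>
    refine ⟨1, one_pos, fun u hu ↦ ⟨contDiffAt_profile hu, fun i hi ↦ ?_⟩⟩
    obtain rfl : i = 0 := Nat.le_zero.1 hi
    simpa using (abs_of_pos (profile_pos hu)).le
  | succ m ih =>
    obtain ⟨C₁, hC₁, h₁⟩ := ih (p - 1) q
    obtain ⟨C₂, hC₂, h₂⟩ := ih (p + 1) (q - 1)
    refine ⟨1 + |p| * C₁ + |2 * q| * C₂, by positivity, fun u hu ↦
      .of_deriv (contDiffAt_profile hu) ?_ ?_⟩
    · have hP : 0 < profile p q u := profile_pos hu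
      rw [abs_of_pos hP]
      refine le_mul_of_one_le_left hP.le ?_
      rw [add_assoc]
      exact le_add_of_nonneg_right (by positivity)
    · have hr : 0 < u * (1 - u ^ 2) := mul_pos hu.1 (one_sub_sq_pos hu)
      have hP : 0 < profile (p - 1) (q - 1) u := profile_pos hu
      have hderiv : deriv (profile p q) =ᶠ[𝓝 u]
          fun x ↦ p * profile (p - 1) q x - 2 * q * profile (p + 1) (q - 1) x := by
        filter_upwards [isOpen_Ioo.mem_nhds hu] with x hx using (hasDerivAt_profile hx).deriv
      refine ((((h₁ u hu).const_mul p).sub ((h₂ u hu).const_mul (2 * q))).mono hr.le ?_).congr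
        hderiv
      calc |p| * (C₁ * profile (p - 1) q u) + |2 * q| * (C₂ * profile (p + 1) (q - 1) u)
          ≤ |p| * (C₁ * profile (p - 1) (q - 1) u)
            + |2 * q| * (C₂ * profile (p - 1) (q - 1) u) := by
            gcongr 2
            · exact mul_le_mul_of_nonneg_left (profile_anti hu le_rfl (by linarith)) hC₁.le
            · exact mul_le_mul_of_nonneg_left (profile_anti hu (by linarith) le_rfl) hC₂.le
        _ ≤ (1 + |p| * C₁ + |2 * q| * C₂) * profile (p - 1) (q - 1) u := by linarith
        _ = _ := by rw [profile_sub_one hu, mul_div_assoc]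

end JetBound

section LinearPart

/-- The linear operator `½ (u⁻¹ - u) ∂_u + u⁻²`, which is the linear part of the right-hand side of
the evolution equation `z_τ = Lz + Q_u[z] / (2(n-1))` behind `D_u`. -/
noncomputable def linOp (f : ℝ → ℝ) (u : ℝ) : ℝ :=
  1 / 2 * (u⁻¹ - u) * deriv f u + f u / u ^ 2

lemma Dop_eq_linOp (n : ℕ) (z : ℝ → ℝ → ℝ) (u τ : ℝ) :
    Dop n z u τ = deriv (z u) τ - linOp (fun x ↦ z x τ) u
      - Qop n (fun x ↦ z x τ) u / (2 * ((n : ℝ) - 1)) := by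
  rw [Dop, linOp]
  ring

variable {f g : ℝ → ℝ} {u : ℝ}

lemma linOp_add (hf : DifferentiableAt ℝ f u) (hg : DifferentiableAt ℝ g u) :
    linOp (fun x ↦ f x + g x) u = linOp f u + linOp g u := by
  simp only [linOp, deriv_fun_add hf hg]
  ring

lemma linOp_sub (hf : DifferentiableAt ℝ f u) (hg : DifferentiableAt ℝ g u) :
    linOp (fun x ↦ f x - g x) u = linOp f u - linOp g u := by
  simp only [linOp, deriv_fun_sub hf hg]
  ring

lemma linOp_const_mul (c : ℝ) : linOp (fun x ↦ c * f x) u = c * linOp f u := by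
  simp only [linOp, deriv_const_mul_field]
  ring

lemma linOp_profile {p q : ℝ} (hu : u ∈ Ioo (0 : ℝ) 1) :
    linOp (profile p q) u =
      (p / 2 + 1) * profile (p - 2) q u - (p / 2 + q) * profile p q u := by
  have hu0 : u ≠ 0 := hu.1.ne'
  have hv : 1 - u ^ 2 ≠ 0 := (one_sub_sq_pos hu).ne'
  rw [linOp, (hasDerivAt_profile hu).deriv]
  simp only [profile, Real.rpow_sub hu.1, Real.rpow_add hu.1, Real.rpow_sub_one hv, Real.rpow_one,
    Real.rpow_two]
  field_simp
  ring

lemma linOp_profile_neg_two {q : ℝ} (hu : u ∈ Ioo (0 : ℝ) 1) :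
    linOp (profile (-2) q) u = (1 - q) * profile (-2) q u := by
  rw [linOp_profile hu]
  ring

end LinearPart

section Barrier

/-- The function `ζ` of the statement, chosen so that the linear part of `D_u` maps `e^{-4γτ} ζ`
to `e^{-4γτ}` times the positive function `correctorResidual γ`. -/
noncomputable def corrector (γ u : ℝ) : ℝ :=
  profile (-4) (1 + 4 * γ) u - profile (-2) (4 * γ) u

/-- The coefficient of `e^{-4γτ}` in the linear part of `D_u` applied to `e^{-4γτ} ζ`, which has to
dominate the quadratic part. -/
noncomputable def correctorResidual (γ u : ℝ) : ℝ :=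
  profile (-6) (2 + 4 * γ) u + profile (-2) (4 * γ) u

/-- The trial function `e^{-2γτ} A u⁻² (1 - u²)^{1+2γ} + c e^{-4γτ} ζ(u)`; the values `c = A₂` and
`c = -A₂` give `z₊` and `z₋`. -/
noncomputable def barrier (γ A c u τ : ℝ) : ℝ :=
  Real.exp (-2 * γ * τ) * (A * profile (-2) (1 + 2 * γ) u)
    + c * Real.exp (-4 * γ * τ) * corrector γ u

variable {γ A c u τ : ℝ}

lemma differentiableAt_corrector (hu : u ∈ Ioo (0 : ℝ) 1) :
    DifferentiableAt ℝ (corrector γ) u :=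
  (differentiableAt_profile hu).sub (differentiableAt_profile hu)

lemma corrector_sub_linOp_corrector (hu : u ∈ Ioo (0 : ℝ) 1) :
    -4 * γ * corrector γ u - linOp (corrector γ) u = correctorResidual γ u := by
  have hsplit : profile (-6) (2 + 4 * γ) u =
      profile (-6) (1 + 4 * γ) u - profile (-4) (1 + 4 * γ) u := by
    have hinner : profile (-6) (2 + 4 * γ) u =
        profile (-6) (1 + 4 * γ) u * (u ^ 0 * (1 - u ^ 2) ^ 1) := by
      rw [← profile_add_natCast hu]
      congr 1 <;> push_cast <;> ring
    have houter : profile (-4) (1 + 4 * γ) u =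
        profile (-6) (1 + 4 * γ) u * (u ^ 2 * (1 - u ^ 2) ^ 0) := by
      rw [← profile_add_natCast hu]
      congr 1 <;> push_cast <;> ring
    rw [hinner, houter]
    ring
  unfold corrector
  rw [linOp_sub (differentiableAt_profile hu) (differentiableAt_profile hu), linOp_profile hu,
    linOp_profile_neg_two hu, correctorResidual, hsplit]
  ring_nf

lemma hasDerivAt_exp_mul (a t : ℝ) :
    HasDerivAt (fun s ↦ Real.exp (a * s)) (a * Real.exp (a * t)) t := by
  simpa [mul_comm] using ((hasDerivAt_id t).const_mul a).exp

lemma deriv_sub_linOp_barrier (hu : u ∈ Ioo (0 : ℝ) 1) :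
    deriv (barrier γ A c u) τ - linOp (fun x ↦ barrier γ A c x τ) u =
      c * Real.exp (-4 * γ * τ) * correctorResidual γ u := by
  have hτ : deriv (barrier γ A c u) τ =
      -2 * γ * Real.exp (-2 * γ * τ) * (A * profile (-2) (1 + 2 * γ) u)
        + c * (-4 * γ * Real.exp (-4 * γ * τ)) * corrector γ u :=
    (((hasDerivAt_exp_mul (-2 * γ) τ).mul_const _).add
      (((hasDerivAt_exp_mul (-4 * γ) τ).const_mul c).mul_const _)).deriv
  have hlin : linOp (fun x ↦ barrier γ A c x τ) u =
      Real.exp (-2 * γ * τ) * (A * (-2 * γ * profile (-2) (1 + 2 * γ) u))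
        + c * Real.exp (-4 * γ * τ) * linOp (corrector γ) u := by
    unfold barrier
    rw [linOp_add (((differentiableAt_profile hu).const_mul A).const_mul _)
      ((differentiableAt_corrector hu).const_mul _), linOp_const_mul, linOp_const_mul,
      linOp_const_mul, linOp_profile_neg_two hu]
    ring
  rw [hτ, hlin, ← corrector_sub_linOp_corrector hu]
  ring

lemma half_profile_le_correctorResidual (hu : u ∈ Ioo (0 : ℝ) 1) :
    profile (-6) (4 * γ) u / 2 ≤ correctorResidual γ u := by
  have hfactor : correctorResidual γ u = profile (-6) (4 * γ) u * ((1 - u ^ 2) ^ 2 + u ^ 4) := by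
    have hinner : profile (-6) (2 + 4 * γ) u =
        profile (-6) (4 * γ) u * (u ^ 0 * (1 - u ^ 2) ^ 2) := by
      rw [← profile_add_natCast hu]
      congr 1 <;> push_cast <;> ring
    have houter : profile (-2) (4 * γ) u =
        profile (-6) (4 * γ) u * (u ^ 4 * (1 - u ^ 2) ^ 0) := by
      rw [← profile_add_natCast hu]
      congr 1 <;> push_cast <;> ring
    rw [correctorResidual, hinner, houter]
    ring
  have hhalf : 1 / 2 ≤ (1 - u ^ 2) ^ 2 + u ^ 4 := by
    linarith [sq_nonneg (1 - 2 * u ^ 2)]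
  rw [hfactor, div_eq_mul_one_div]
  exact mul_le_mul_of_nonneg_left hhalf (profile_pos hu).le

lemma exp_neg_four_mul (γ τ : ℝ) :
    Real.exp (-4 * γ * τ) = Real.exp (-2 * γ * τ) ^ 2 := by
  rw [← Real.exp_nat_mul]
  push_cast
  ring_nf

lemma exists_jetBoundAt_corrector (m : ℕ) (γ : ℝ) :
    ∃ C > 0, ∀ u ∈ Ioo (0 : ℝ) 1,
      JetBoundAt m (corrector γ) (u * (1 - u ^ 2)) (C * profile (-4) (4 * γ) u) u := by
  obtain ⟨C₁, hC₁, h₁⟩ := exists_jetBoundAt_profile m (-4) (1 + 4 * γ)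
  obtain ⟨C₂, hC₂, h₂⟩ := exists_jetBoundAt_profile m (-2) (4 * γ)
  refine ⟨C₁ + C₂, by positivity, fun u hu ↦ ?_⟩
  have hr : 0 < u * (1 - u ^ 2) := mul_pos hu.1 (one_sub_sq_pos hu)
  refine ((h₁ u hu).sub (h₂ u hu)).mono hr.le ?_
  have hfirst : profile (-4) (1 + 4 * γ) u ≤ profile (-4) (4 * γ) u :=
    profile_anti hu le_rfl (by linarith)
  have hsecond : profile (-2) (4 * γ) u ≤ profile (-4) (4 * γ) u :=
    profile_anti hu (by norm_num) le_rfl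
  rw [add_mul]
  gcongr

lemma exists_jetBoundAt_barrier (m : ℕ) (γ : ℝ) :
    ∃ C > 0, ∀ A c u τ : ℝ, u ∈ Ioo (0 : ℝ) 1 →
      |c| * Real.exp (-2 * γ * τ) ≤ A * profile 2 (1 - 2 * γ) u →
      JetBoundAt m (fun x ↦ barrier γ A c x τ) (u * (1 - u ^ 2))
        (C * (A * Real.exp (-2 * γ * τ) * profile (-2) (1 + 2 * γ) u)) u := by
  obtain ⟨C₁, hC₁, h₁⟩ := exists_jetBoundAt_profile m (-2) (1 + 2 * γ)
  obtain ⟨C₂, hC₂, h₂⟩ := exists_jetBoundAt_corrector m γ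
  refine ⟨C₁ + C₂, by positivity, fun A c u τ hu hc ↦ ?_⟩
  have hr : 0 < u * (1 - u ^ 2) := mul_pos hu.1 (one_sub_sq_pos hu)
  have hA : 0 ≤ A := nonneg_of_mul_nonneg_left (hc.trans' (by positivity)) (profile_pos hu)
  have hP : profile (-2) (1 + 2 * γ) u = profile 2 (1 - 2 * γ) u * profile (-4) (4 * γ) u := by
    rw [← profile_add hu]
    ring_nf
  have hcorrector : |c| * Real.exp (-4 * γ * τ) * profile (-4) (4 * γ) u ≤
      A * Real.exp (-2 * γ * τ) * profile (-2) (1 + 2 * γ) u := by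
    have hw : 0 ≤ Real.exp (-2 * γ * τ) * profile (-4) (4 * γ) u :=
      mul_nonneg (Real.exp_nonneg _) (profile_pos hu).le
    rw [exp_neg_four_mul, hP]
    linarith [mul_le_mul_of_nonneg_right hc hw]
  refine ((((h₁ u hu).const_mul A).const_mul _).add ((h₂ u hu).const_mul _)).mono hr.le ?_
  simp only [abs_mul, Real.abs_exp, abs_of_nonneg hA]
  linarith [mul_le_mul_of_nonneg_left hcorrector hC₂.le]

lemma exists_abs_Dop_barrier_sub_le (γ : ℝ) :
    ∃ C > 0, ∀ (n : ℕ) (A c u τ : ℝ), 2 ≤ n → u ∈ Ioo (0 : ℝ) 1 →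
      |c| * Real.exp (-2 * γ * τ) ≤ A * profile 2 (1 - 2 * γ) u →
      |Dop n (barrier γ A c) u τ - c * Real.exp (-4 * γ * τ) * correctorResidual γ u| ≤
        C * A ^ 2 * (Real.exp (-4 * γ * τ) * profile (-6) (4 * γ) u) := by
  obtain ⟨C, hC, hbarrier⟩ := exists_jetBoundAt_barrier 2 γ
  refine ⟨9 / 4 * C ^ 2, by positivity, fun n A c u τ hn hu hc ↦ ?_⟩
  have hv := one_sub_sq_pos hu
  have hscale : u * (1 - u ^ 2) ≤ u :=
    mul_le_of_le_one_right hu.1.le (sub_le_self 1 (sq_nonneg u))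
  have hQ := (hbarrier A c u τ hu hc).abs_Qop_div_le hn (mul_pos hu.1 hv) hscale
  have hP : profile (-6) (4 * γ) u =
      (profile (-2) (1 + 2 * γ) u / (u * (1 - u ^ 2))) ^ 2 := by
    rw [← profile_sub_one hu, sq, ← profile_add hu]
    ring_nf
  rw [Dop_eq_linOp, deriv_sub_linOp_barrier hu, sub_sub_cancel_left, abs_neg]
  refine hQ.trans_eq ?_
  rw [exp_neg_four_mul, hP]
  ring

lemma exists_Dop_barrier_sign (γ : ℝ) :
    ∃ C > 0, ∀ (n : ℕ) (A c u τ : ℝ), 2 ≤ n → u ∈ Ioo (0 : ℝ) 1 →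
      c * Real.exp (-2 * γ * τ) ≤ A * profile 2 (1 - 2 * γ) u → C * A ^ 2 ≤ c →
      0 ≤ Dop n (barrier γ A c) u τ ∧ Dop n (barrier γ A (-c)) u τ ≤ 0 := by
  obtain ⟨C, hC, hDop⟩ := exists_abs_Dop_barrier_sub_le γ
  refine ⟨2 * C, by positivity, fun n A c u τ hn hu hc hAc ↦ ?_⟩
  have hc0 : 0 ≤ c := hAc.trans' (by positivity)
  have hdom : C * A ^ 2 * (Real.exp (-4 * γ * τ) * profile (-6) (4 * γ) u) ≤
      c * Real.exp (-4 * γ * τ) * correctorResidual γ u := by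
    have hP : 0 < profile (-6) (4 * γ) u := profile_pos hu
    calc C * A ^ 2 * (Real.exp (-4 * γ * τ) * profile (-6) (4 * γ) u)
        ≤ c / 2 * (Real.exp (-4 * γ * τ) * profile (-6) (4 * γ) u) := by
          gcongr
          linarith
      _ = c * Real.exp (-4 * γ * τ) * (profile (-6) (4 * γ) u / 2) := by ring
      _ ≤ _ := by
          gcongr
          exact half_profile_le_correctorResidual hu
  have hsuper := hDop n A c u τ hn hu (by rwa [abs_of_nonneg hc0])
  have hsub := hDop n A (-c) u τ hn hu (by rwa [abs_neg, abs_of_nonneg hc0])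
  constructor
  · linarith [(abs_le.1 hsuper).1]
  · linarith [(abs_le.1 hsub).2]

end Barrier

section Region

lemma le_profile_of_mem_region {κ B X u : ℝ} (hκ : 0 < κ) (hB : 2 ^ κ⁻¹ ≤ B)
    (hB' : 2 ^ (κ / 2) ≤ B) (hX : 0 < X) (hlower : B * √X ≤ u)
    (hupper : u ≤ 1 - B * X ^ (κ / 2)) :
    u ∈ Ioo (0 : ℝ) 1 ∧ X ≤ profile 2 (2 / κ) u := by
  have hB0 : 0 < B := hB.trans_lt' (by positivity)
  have hu : u ∈ Ioo (0 : ℝ) 1 :=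
    ⟨hlower.trans_lt' (by positivity), hupper.trans_lt (sub_lt_self 1 (by positivity))⟩
  have hv := one_sub_sq_pos hu
  have hinner : 2 ^ (2 / κ) * X ≤ u ^ 2 := by
    calc 2 ^ (2 / κ) * X = (2 ^ κ⁻¹ * √X) ^ 2 := by
          rw [mul_pow, Real.sq_sqrt hX.le, ← Real.rpow_mul_natCast zero_le_two]
          ring_nf
      _ ≤ u ^ 2 := by
          gcongr
          exact hlower.trans' (by gcongr)
  have houter : 2 * X ≤ (1 - u ^ 2) ^ (2 / κ) := by
    rw [← inv_div, Real.le_rpow_inv_iff_of_pos (by positivity) hv.le (by positivity),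
      Real.mul_rpow zero_le_two hX.le]
    calc 2 ^ (κ / 2) * X ^ (κ / 2) ≤ B * X ^ (κ / 2) := by gcongr
      _ ≤ 1 - u := by linarith
      _ ≤ 1 - u ^ 2 := by nlinarith [hu.1, hu.2]
  refine ⟨hu, ?_⟩
  rw [profile, Real.rpow_two]
  rcases le_total (1 / 2) (u ^ 2) with hhalf | hhalf
  · calc X = 1 / 2 * (2 * X) := by ring
      _ ≤ u ^ 2 * (1 - u ^ 2) ^ (2 / κ) := by gcongr
  · calc X = (2 ^ (2 / κ) * X) * (1 / 2) ^ (2 / κ) := by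
          rw [one_div, Real.inv_rpow zero_le_two]
          field_simp
      _ ≤ u ^ 2 * (1 - u ^ 2) ^ (2 / κ) := by
          gcongr
          linarith

variable {k : ℕ}

lemma one_sub_two_mul_gam : 1 - 2 * gam k = 2 / k := by
  rw [gam]
  ring

lemma mu_eq_mul_gam (hk : 1 ≤ k) : mu k = k * gam k := by
  have hk0 : (k : ℝ) ≠ 0 := by positivity
  rw [mu, gam]
  field_simp

lemma sqrt_mul_exp_neg_gam (R τ : ℝ) :
    √R * Real.exp (-gam k * τ) = √(R * Real.exp (-2 * gam k * τ)) := by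
  rw [Real.sqrt_mul' _ (Real.exp_nonneg _), ← Real.exp_half]
  ring_nf

lemma rpow_mul_exp_neg_mu (hk : 1 ≤ k) {R : ℝ} (hR : 0 ≤ R) (τ : ℝ) :
    R ^ ((k : ℝ) / 2) * Real.exp (-mu k * τ) =
      (R * Real.exp (-2 * gam k * τ)) ^ ((k : ℝ) / 2) := by
  rw [Real.mul_rpow hR (Real.exp_nonneg _), ← Real.exp_mul, mu_eq_mul_gam hk]
  ring_nf

lemma two_rpow_inv_le_two_pow (hk : 1 ≤ k) : (2 : ℝ) ^ (k : ℝ)⁻¹ ≤ 2 ^ k := by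
  have hk1 : (1 : ℝ) ≤ k := by exact_mod_cast hk
  rw [← Real.rpow_natCast]
  exact Real.rpow_le_rpow_of_exponent_le one_le_two ((inv_le_one_of_one_le₀ hk1).trans hk1)

lemma two_rpow_half_le_two_pow (k : ℕ) : (2 : ℝ) ^ ((k : ℝ) / 2) ≤ 2 ^ k := by
  rw [← Real.rpow_natCast]
  exact Real.rpow_le_rpow_of_exponent_le one_le_two (half_le_self k.cast_nonneg)

lemma barrier_gam (A c : ℝ) :
    barrier (gam k) A c = fun u τ ↦ Real.exp (-2 * gam k * τ) * Z1 k A u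
      + c * Real.exp (-4 * gam k * τ) * corrector (gam k) u := by
  funext u τ
  rw [barrier, Z1, profile, mul_assoc A]

lemma barrier_gam_neg (A c : ℝ) :
    barrier (gam k) A (-c) = fun u τ ↦ Real.exp (-2 * gam k * τ) * Z1 k A u
      - c * Real.exp (-4 * gam k * τ) * corrector (gam k) u := by
  simp only [barrier_gam, neg_mul c, neg_mul (c * _), ← sub_eq_add_neg]

end Region

theorem stmt0_general (n k : ℕ) (hn : 2 ≤ n) (hk : 1 ≤ k) (A₁ : ℝ) (hA₁ : 0 < A₁) :
    ∃ (ζ : ℝ → ℝ) (B₁ A₂min : ℝ), 0 < B₁ ∧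
      ∀ A₂ : ℝ, A₂min ≤ A₂ → ∀ u τ : ℝ,
        B₁ * Real.sqrt (A₂ / A₁) * Real.exp (-gam k * τ) ≤ u →
        u ≤ 1 - B₁ * (A₂ / A₁) ^ ((k:ℝ)/2) * Real.exp (-mu k * τ) →
        0 ≤ Dop n (fun u' τ' =>
            Real.exp (-2 * gam k * τ') * Z1 k A₁ u'
              + A₂ * Real.exp (-4 * gam k * τ') * ζ u') u τ ∧
        Dop n (fun u' τ' =>
            Real.exp (-2 * gam k * τ') * Z1 k A₁ u'
              - A₂ * Real.exp (-4 * gam k * τ') * ζ u') u τ ≤ 0 := by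
  obtain ⟨C, hC, hsign⟩ := exists_Dop_barrier_sign (gam k)
  refine ⟨corrector (gam k), 2 ^ k, C * A₁ ^ 2, by positivity,
    fun A₂ hA₂ u τ hlower hupper ↦ ?_⟩
  have hA₂0 : 0 < A₂ := hA₂.trans_lt' (by positivity)
  rw [mul_assoc, sqrt_mul_exp_neg_gam] at hlower
  rw [mul_assoc, rpow_mul_exp_neg_mu hk (by positivity)] at hupper
  obtain ⟨hu, hX⟩ := le_profile_of_mem_region (by positivity)
    (two_rpow_inv_le_two_pow hk) (two_rpow_half_le_two_pow k) (by positivity) hlower hupper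
  rw [← one_sub_two_mul_gam, div_mul_eq_mul_div, div_le_iff₀' hA₁] at hX
  rw [← barrier_gam, ← barrier_gam_neg]
  exact hsign n A₁ A₂ u τ hn hu hX hA₂

/-- existence of sub- and supersolutions in the intermediate region. -/
theorem stmt0 (n k : ℕ) (hn : 2 ≤ n) (hk : 3 ≤ k) (A₁ : ℝ) (hA₁ : 0 < A₁) :
    ∃ (ζ : ℝ → ℝ) (B₁ A₂min : ℝ), 0 < B₁ ∧
      ∀ A₂ : ℝ, A₂min ≤ A₂ → ∃ τ₁ : ℝ, ∀ u τ : ℝ, τ₁ ≤ τ →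
        B₁ * Real.sqrt (A₂ / A₁) * Real.exp (-gam k * τ) ≤ u →
        u ≤ 1 - B₁ * (A₂ / A₁) ^ ((k:ℝ)/2) * Real.exp (-mu k * τ) →
        0 ≤ Dop n (fun u' τ' =>
            Real.exp (-2 * gam k * τ') * Z1 k A₁ u'
              + A₂ * Real.exp (-4 * gam k * τ') * ζ u') u τ ∧
        Dop n (fun u' τ' =>
            Real.exp (-2 * gam k * τ') * Z1 k A₁ u'
              - A₂ * Real.exp (-4 * gam k * τ') * ζ u') u τ ≤ 0 := by
  obtain ⟨ζ, B₁, A₂min, hB₁, hsign⟩ := stmt0_general n k hn (by omega) A₁ hA₁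
  exact ⟨ζ, B₁, A₂min, hB₁, fun A₂ hA₂ ↦ ⟨0, fun u τ _ ↦ hsign A₂ hA₂ u τ⟩⟩
end

section
/- Fix an integer k ≥ 3 and a constant b_k < 0; set μ_k := k/2 − 1. Let h_k be the degree-k monic Hermite polynomial orthogonal in L²(ℝ, e^{−σ²/4}dσ), and let C_k be a constant such that |h_k(σ) − σ^k| ≤ C_k|σ|^{k−2} for all |σ| ≥ 1. Let B > 0 be such that P := 2(B/|b_k|)^{1/k} satisfies P ≥ (10/3)√C_k. Then for every W > 0 there exists ε₀ > 0, depending only on k, b_k, B, W, such that for every ε ∈ (0, ε₀) the following holds: if f : [−P,P] → ℝ is C¹ with ∫_{−P}^{P} (f(σ) − b_k h_k(σ))² e^{−σ²/4} dσ ≤ 9ε² and sup_{|σ|≤P}(|f(σ)| + |f′(σ)|) ≤ W, then |f(2P/5)| < B, and |f(σ)| > B for every σ with 3P/5 ≤ |σ| ≤ P. -/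
/-!
On the interface interval `[-P, P]` the model `b_k h_k` takes values well separated from `B`: since
`|b_k| (P / 2)^k = B` and `C_k ≤ (3 P / 10)^2`, replacing `h_k` by `σ^k` costs a factor `1 ± θ`,
with `θ = 9 / 16` at `2 P / 5` and `θ = 1 / 4` for `|σ| ≥ 3 P / 5`, and
`(25 / 16) (4 / 5)^3 = 4 / 5`, `(3 / 4) (6 / 5)^3 > 6 / 5`. The difference `f - b_k h_k` is
Lipschitz with a constant independent of `f`, so a small weighted `L²` norm makes it uniformly
smaller than `B / 5`: a large value would persist on an interval of definite length.

The estimate on `h_k` is available only for `|σ| ≥ 1`, so `P ≥ 5 / 2` is required as well. This is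
forced by orthogonality: `h_k` is an eigenfunction of the Ornstein–Uhlenbeck operator, its
coefficient of degree `k - 2` is `-k (k - 1)`, and therefore `C_k ≥ k (k - 1) ≥ 6`.
-/

open Topology Filter Asymptotics Set MeasureTheory

/-- `P = 2(B/|b_k|)^{1/k}`. -/
noncomputable def Pdef (k : ℕ) (bk B : ℝ) : ℝ := 2 * (B / |bk|) ^ ((1:ℝ)/(k:ℝ))

section PolynomialGrowth

open Polynomial

theorem abs_coeff_le_of_eventually_abs_eval_le {p : ℝ[X]} {n : ℕ} {C : ℝ}
    (hp : ∀ᶠ x in atTop, |p.eval x| ≤ C * x ^ n) : |p.coeff n| ≤ C := by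
  have hquot : ∀ᶠ x in atTop, |p.eval x / (X ^ n : ℝ[X]).eval x| ≤ C := by
    filter_upwards [hp, eventually_gt_atTop 0] with x hx hx0
    rw [eval_pow, eval_X, abs_div, abs_of_pos (pow_pos hx0 n)]
    exact (div_le_iff₀ (pow_pos hx0 n)).2 hx
  rcases lt_trichotomy p.degree (X ^ n : ℝ[X]).degree with hlt | heq | hgt
  · rw [coeff_eq_zero_of_degree_lt (hlt.trans_eq (degree_X_pow n)), abs_zero]
    obtain ⟨x, hx⟩ := hquot.exists
    exact (abs_nonneg _).trans hx
  · have hlim := le_of_tendsto (div_tendsto_atTop_leadingCoeff_div_of_degree_eq p _ heq).abs hquot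
    rwa [(monic_X_pow n).leadingCoeff, div_one, leadingCoeff,
      natDegree_eq_of_degree_eq_some (heq.trans (degree_X_pow n))] at hlim
  · have hlim := abs_div_tendsto_atTop_atTop_of_degree_gt p _ hgt (monic_X_pow n).ne_zero
    obtain ⟨x, hle, hgt⟩ := (hquot.and (hlim.eventually_gt_atTop C)).exists
    exact absurd hle hgt.not_ge

end PolynomialGrowth

section GaussianWeight

open Polynomial

variable {b : ℝ}

theorem integrable_eval_mul_exp_neg_mul_sq (hb : 0 < b) (p : ℝ[X]) :
    Integrable fun x : ℝ => p.eval x * Real.exp (-b * x ^ 2) := by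
  induction p using Polynomial.induction_on' with
  | add p q hp hq =>
    simp only [eval_add, add_mul]
    exact hp.add hq
  | monomial n a =>
    have hn : (-1 : ℝ) < n := neg_one_lt_zero.trans_le n.cast_nonneg
    simpa only [eval_monomial, Real.rpow_natCast, mul_assoc] using
      (integrable_rpow_mul_exp_neg_mul_sq hb hn).const_mul a

/-- The integral of a polynomial against the Gaussian weight `e^{-b x²}`. The inner product of
polynomials `p`, `q` in `L²(ℝ, e^{-b x²} dx)` is `gaussianIntegral hb (p * q)`; the space `𝔥` is the
case `b = 1 / 4`. -/
noncomputable def gaussianIntegral (hb : 0 < b) : ℝ[X] →ₗ[ℝ] ℝ where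
  toFun p := ∫ x : ℝ, p.eval x * Real.exp (-b * x ^ 2)
  map_add' p q := by
    simp only [eval_add, add_mul]
    exact integral_add (integrable_eval_mul_exp_neg_mul_sq hb p)
      (integrable_eval_mul_exp_neg_mul_sq hb q)
  map_smul' c p := by
    simp only [eval_smul, smul_eq_mul, mul_assoc, RingHom.id_apply, integral_const_mul]

theorem gaussianIntegral_apply (hb : 0 < b) (p : ℝ[X]) :
    gaussianIntegral hb p = ∫ x : ℝ, p.eval x * Real.exp (-b * x ^ 2) := rfl

theorem gaussianIntegral_derivative (hb : 0 < b) (p : ℝ[X]) :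
    gaussianIntegral hb (derivative p) = gaussianIntegral hb (C (2 * b) * X * p) := by
  rw [← sub_eq_zero, ← map_sub]
  refine integral_eq_zero_of_hasDerivAt_of_integrable (fun x => ?_)
    (integrable_eval_mul_exp_neg_mul_sq hb _) (integrable_eval_mul_exp_neg_mul_sq hb p)
  have hexp : HasDerivAt (fun y : ℝ => -b * y ^ 2) (-b * (2 * x)) x := by
    simpa using (hasDerivAt_pow 2 x).const_mul (-b)
  refine ((p.hasDerivAt x).mul hexp.exp).congr_deriv ?_
  simp only [eval_sub, eval_mul, eval_C, eval_X]
  ring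

theorem gaussianIntegral_mul_self_eq_zero (hb : 0 < b) {p : ℝ[X]} :
    gaussianIntegral hb (p * p) = 0 ↔ p = 0 := by
  refine ⟨fun h => Polynomial.funext fun x => ?_, fun h => by simp [h]⟩
  have hnonneg : 0 ≤ fun x : ℝ => (p * p).eval x * Real.exp (-b * x ^ 2) := fun x => by
    simp only [eval_mul]
    exact mul_nonneg (mul_self_nonneg _) (Real.exp_pos _).le
  have hae := (integral_eq_zero_iff_of_nonneg hnonneg
    (integrable_eval_mul_exp_neg_mul_sq hb _)).1 h
  have hcont : Continuous fun x : ℝ => (p * p).eval x * Real.exp (-b * x ^ 2) := by fun_prop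
  have hzero : (p * p).eval x * Real.exp (-b * x ^ 2) = 0 :=
    congrFun ((hcont.ae_eq_iff_eq volume continuous_const).1 hae) x
  simpa [(Real.exp_pos _).ne'] using hzero

theorem gaussianIntegral_mul_eq_zero_of_degree_lt (hb : 0 < b) {h q : ℝ[X]} {k : ℕ}
    (horth : ∀ j < k, gaussianIntegral hb (X ^ j * h) = 0) (hq : q.degree < k) :
    gaussianIntegral hb (q * h) = 0 := by
  have hspan : degreeLT ℝ k ≤
      LinearMap.ker (gaussianIntegral hb ∘ₗ LinearMap.mulRight ℝ h) := by
    classical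
    rw [degreeLT_eq_span_X_pow, Submodule.span_le]
    intro p hp
    obtain ⟨j, hj, rfl⟩ := Finset.mem_image.1 (Finset.mem_coe.1 hp)
    exact horth j (Finset.mem_range.1 hj)
  exact hspan (mem_degreeLT.2 hq)

/-- The Ornstein–Uhlenbeck operator `p ↦ p'' - 2 b x p'`, which is symmetric in
`L²(ℝ, e^{-b x²} dx)` and has the orthogonal polynomials of that space as eigenfunctions. -/
noncomputable def ornsteinUhlenbeck (b : ℝ) (p : ℝ[X]) : ℝ[X] :=
  derivative (derivative p) - C (2 * b) * X * derivative p

theorem coeff_ornsteinUhlenbeck (b : ℝ) (p : ℝ[X]) (n : ℕ) :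
    (ornsteinUhlenbeck b p).coeff n =
      (n + 2) * (n + 1) * p.coeff (n + 2) - 2 * b * n * p.coeff n := by
  have hX : (X * derivative p).coeff n = n * p.coeff n := by
    cases n with
    | zero => simp
    | succ n => rw [coeff_X_mul, coeff_derivative]; push_cast; ring
  rw [ornsteinUhlenbeck, coeff_sub, mul_assoc, coeff_C_mul, hX, coeff_derivative, coeff_derivative]
  push_cast
  ring

theorem degree_ornsteinUhlenbeck_lt (b : ℝ) {p : ℝ[X]} {k : ℕ} (hp : p.degree < k) :
    (ornsteinUhlenbeck b p).degree < k := by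
  rw [degree_lt_iff_coeff_zero] at hp ⊢
  intro m hm
  rw [coeff_ornsteinUhlenbeck, hp m hm, hp (m + 2) (by lia)]
  ring

theorem gaussianIntegral_ornsteinUhlenbeck_mul (hb : 0 < b) (p q : ℝ[X]) :
    gaussianIntegral hb (ornsteinUhlenbeck b p * q) =
      -gaussianIntegral hb (derivative p * derivative q) := by
  have hparts := gaussianIntegral_derivative hb (derivative p * q)
  rw [derivative_mul, map_add] at hparts
  rw [ornsteinUhlenbeck, sub_mul, map_sub, mul_assoc _ (derivative p) q]
  linarith

theorem gaussianIntegral_ornsteinUhlenbeck_mul_comm (hb : 0 < b) (p q : ℝ[X]) :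
    gaussianIntegral hb (ornsteinUhlenbeck b p * q) =
      gaussianIntegral hb (ornsteinUhlenbeck b q * p) := by
  rw [gaussianIntegral_ornsteinUhlenbeck_mul, gaussianIntegral_ornsteinUhlenbeck_mul,
    mul_comm (derivative p)]

theorem ornsteinUhlenbeck_eq_of_orthogonal (hb : 0 < b) {h : ℝ[X]} {k : ℕ}
    (hdeg : h.natDegree ≤ k) (horth : ∀ j < k, gaussianIntegral hb (X ^ j * h) = 0) :
    ornsteinUhlenbeck b h = C (-(2 * b * k)) * h := by
  set r := ornsteinUhlenbeck b h - C (-(2 * b * k)) * h with hr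
  have hr_deg : r.degree < k := by
    rw [degree_lt_iff_coeff_zero]
    intro m hm
    rw [hr, coeff_sub, coeff_ornsteinUhlenbeck, coeff_C_mul,
      coeff_eq_zero_of_natDegree_lt (n := m + 2) (by lia)]
    rcases hm.eq_or_lt with rfl | hm
    · ring
    · rw [coeff_eq_zero_of_natDegree_lt (by lia)]
      ring
  have hr_orth : gaussianIntegral hb (r * h) = 0 :=
    gaussianIntegral_mul_eq_zero_of_degree_lt hb horth hr_deg
  have hLr_orth : gaussianIntegral hb (ornsteinUhlenbeck b h * r) = 0 := by
    rw [gaussianIntegral_ornsteinUhlenbeck_mul_comm]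
    exact gaussianIntegral_mul_eq_zero_of_degree_lt hb horth (degree_ornsteinUhlenbeck_lt b hr_deg)
  have hrr : r * r = ornsteinUhlenbeck b h * r - (-(2 * b * k)) • (r * h) := by
    rw [smul_eq_C_mul]
    nth_rw 1 [hr]
    ring
  refine sub_eq_zero.1 ((gaussianIntegral_mul_self_eq_zero hb).1 ?_)
  rw [hrr, map_sub, map_smul, hLr_orth, hr_orth, smul_zero, sub_zero]

theorem four_mul_coeff_of_orthogonal (hb : 0 < b) {h : ℝ[X]} {n : ℕ}
    (hdeg : h.natDegree ≤ n + 2) (horth : ∀ j < n + 2, gaussianIntegral hb (X ^ j * h) = 0) :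
    4 * b * h.coeff n = -((n + 2) * (n + 1) * h.coeff (n + 2)) := by
  have hcoeff := congrArg (coeff · n) (ornsteinUhlenbeck_eq_of_orthogonal hb hdeg horth)
  simp only [coeff_ornsteinUhlenbeck, coeff_C_mul] at hcoeff
  push_cast at hcoeff
  linarith

theorem le_four_mul_of_orthogonal_of_abs_eval_sub_pow_le (hb : 0 < b) {h : ℝ[X]} {n : ℕ} {c : ℝ}
    (hmonic : h.Monic) (hdeg : h.natDegree = n + 2)
    (horth : ∀ j < n + 2, gaussianIntegral hb (X ^ j * h) = 0)
    (hc : ∀ᶠ x in atTop, |h.eval x - x ^ (n + 2)| ≤ c * x ^ n) :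
    (n + 2) * (n + 1) ≤ 4 * b * c := by
  have hle : |(h - X ^ (n + 2)).coeff n| ≤ c :=
    abs_coeff_le_of_eventually_abs_eval_le (by simpa only [eval_sub, eval_pow, eval_X] using hc)
  rw [coeff_sub, coeff_X_pow, if_neg (by lia), sub_zero] at hle
  have hlead : h.coeff (n + 2) = 1 := hdeg ▸ hmonic.coeff_natDegree
  have hcoeff := four_mul_coeff_of_orthogonal hb hdeg.le horth
  rw [hlead, mul_one] at hcoeff
  calc ((n : ℝ) + 2) * (n + 1) = 4 * b * -h.coeff n := by linarith
    _ ≤ 4 * b * c := by gcongr; exact (neg_le_abs _).trans hle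

end GaussianWeight

section Interpolation

open scoped NNReal

variable {a b l m δ : ℝ} {K : ℝ≥0} {g w : ℝ → ℝ}

theorem mul_sq_le_integral_sq_mul_of_lipschitzOnWith (hg : LipschitzOnWith K g (Icc a b))
    (hw : ContinuousOn w (Icc a b)) (hm : 0 ≤ m) (hmw : ∀ y ∈ Icc a b, m ≤ w y)
    (hl : 0 ≤ l) (hlab : l ≤ b - a) (hδ : 0 ≤ δ) (hKl : K * l ≤ δ / 2)
    {x : ℝ} (hx : x ∈ Icc a b) (hgx : δ ≤ |g x|) :
    l * ((δ / 2) ^ 2 * m) ≤ ∫ y in a..b, g y ^ 2 * w y := by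
  obtain ⟨c, hac, hcb, hcx⟩ : ∃ c, a ≤ c ∧ c + l ≤ b ∧ ∀ y ∈ Icc c (c + l), |x - y| ≤ l := by
    refine ⟨min x (b - l), le_min hx.1 (by linarith), ?_, fun y hy => abs_le.2 ?_⟩
    · linarith [min_le_right x (b - l)]
    · rcases min_choice x (b - l) with hc | hc <;> rw [hc] at hy <;>
        constructor <;> linarith [hx.2, hy.1, hy.2, min_le_left x (b - l)]
  have hsub : Icc c (c + l) ⊆ Icc a b := Icc_subset_Icc hac hcb
  have hlower : ∀ y ∈ Icc c (c + l), δ / 2 ≤ |g y| := fun y hy => by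
    have hdist : |g x - g y| ≤ K * |x - y| := hg.dist_le_mul x hx y (hsub hy)
    have hclose : K * |x - y| ≤ K * l := by gcongr; exact hcx y hy
    linarith [abs_sub_abs_le_abs_sub (g x) (g y)]
  have hcont : ContinuousOn (fun y => g y ^ 2 * w y) (Icc a b) := (hg.continuousOn.pow 2).mul hw
  have hab : a ≤ b := hx.1.trans hx.2
  have hcl : c ≤ c + l := le_add_of_nonneg_right hl
  calc l * ((δ / 2) ^ 2 * m) = ∫ _ in c..c + l, (δ / 2) ^ 2 * m := by
        rw [intervalIntegral.integral_const, add_sub_cancel_left, smul_eq_mul]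
    _ ≤ ∫ y in c..c + l, g y ^ 2 * w y := by
        refine intervalIntegral.integral_mono_on hcl intervalIntegrable_const
          ((hcont.mono hsub).intervalIntegrable_of_Icc hcl) fun y hy => ?_
        rw [← sq_abs (g y)]
        gcongr
        exacts [hlower y hy, hmw y (hsub hy)]
    _ ≤ ∫ y in a..b, g y ^ 2 * w y := by
        refine intervalIntegral.integral_mono_interval hac hcl hcb ?_
          (hcont.intervalIntegrable_of_Icc hab)
        filter_upwards [ae_restrict_mem measurableSet_Ioc] with y hy
        exact mul_nonneg (sq_nonneg _) (hm.trans (hmw y (Ioc_subset_Icc_self hy)))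

theorem exists_forall_abs_lt_of_integral_sq_mul_lt (hab : a < b) (hw : ContinuousOn w (Icc a b))
    (hw_pos : ∀ y ∈ Icc a b, 0 < w y) (K : ℝ≥0) (hδ : 0 < δ) :
    ∃ η : ℝ, 0 < η ∧ ∀ g : ℝ → ℝ, LipschitzOnWith K g (Icc a b) →
      ∫ y in a..b, g y ^ 2 * w y < η → ∀ x ∈ Icc a b, |g x| < δ := by
  obtain ⟨y₀, hy₀, hmin⟩ := isCompact_Icc.exists_isMinOn (nonempty_Icc.2 hab.le) hw
  have hm : 0 < w y₀ := hw_pos y₀ hy₀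
  set l := min (b - a) (δ / (2 * (K + 1)))
  have hl : 0 < l := lt_min (sub_pos.2 hab) (by positivity)
  have hKl : K * l ≤ δ / 2 :=
    calc (K : ℝ) * l ≤ (K + 1) * (δ / (2 * (K + 1))) := by
          gcongr
          exacts [le_add_of_nonneg_right zero_le_one, min_le_right _ _]
      _ = δ / 2 := by field_simp
  refine ⟨l * ((δ / 2) ^ 2 * w y₀), by positivity, fun g hg hlt x hx => ?_⟩
  by_contra! hgx
  exact hlt.not_ge (mul_sq_le_integral_sq_mul_of_lipschitzOnWith hg hw hm.le
    (fun y hy => hmin hy) hl.le (min_le_left _ _) hδ.le hKl hx hgx)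

theorem lipschitzOnWith_Icc_of_nnnorm_deriv_le {E : Type*} [NormedAddCommGroup E]
    [NormedSpace ℝ E] {f : ℝ → E} (hfc : ContinuousOn f (Icc a b))
    (hfd : DifferentiableOn ℝ f (Ioo a b)) (hbound : ∀ x ∈ Ioo a b, ‖deriv f x‖₊ ≤ K) :
    LipschitzOnWith K f (Icc a b) := by
  rcases eq_or_ne a b with rfl | hab
  · simp [LipschitzOnWith]
  · rw [← closure_Ioo hab] at hfc ⊢
    exact ((convex_Ioo a b).lipschitzOnWith_of_nnnorm_deriv_le
      (fun x hx => hfd.differentiableAt (Ioo_mem_nhds hx.1 hx.2)) hbound).closure hfc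

end Interpolation

section InterfaceBounds

variable {k : ℕ} {bk B C θ x y : ℝ}

theorem abs_sub_pow_le_mul_abs_pow (hk : 2 ≤ k) (hC : C ≤ θ * |x| ^ 2)
    (hy : |y - x ^ k| ≤ C * |x| ^ (k - 2)) : |y - x ^ k| ≤ θ * |x| ^ k :=
  calc |y - x ^ k| ≤ C * |x| ^ (k - 2) := hy
    _ ≤ θ * |x| ^ 2 * |x| ^ (k - 2) := by gcongr
    _ = θ * |x| ^ k := by rw [mul_assoc, pow_mul_pow_sub _ hk]

theorem Pdef_pos (hbk : bk ≠ 0) (hB : 0 < B) : 0 < Pdef k bk B := by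
  unfold Pdef
  positivity

theorem abs_mul_mul_Pdef_div_two_pow (hk : k ≠ 0) (hbk : bk ≠ 0) (hB : 0 ≤ B) (t : ℝ) :
    |bk| * (t * (Pdef k bk B / 2)) ^ k = t ^ k * B := by
  have hroot : (Pdef k bk B / 2) ^ k = B / |bk| := by
    rw [Pdef, mul_div_cancel_left₀ _ two_ne_zero, one_div,
      Real.rpow_inv_natCast_pow (by positivity) hk]
  rw [mul_pow, hroot]
  field_simp

theorem abs_mul_le_of_abs_sub_pow_le (hk : 3 ≤ k) (hbk : bk ≠ 0) (hB : 0 < B)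
    (hC : C ≤ (3 / 10 * Pdef k bk B) ^ 2) (hx : |x| = 2 * Pdef k bk B / 5)
    (hy : |y - x ^ k| ≤ C * |x| ^ (k - 2)) : |bk * y| ≤ 4 / 5 * B := by
  have hclose : |y - x ^ k| ≤ 9 / 16 * |x| ^ k :=
    abs_sub_pow_le_mul_abs_pow (by lia) (by rw [hx]; linarith) hy
  have hyx : |y| ≤ 25 / 16 * |x| ^ k := by
    linarith [abs_sub_abs_le_abs_sub y (x ^ k), abs_pow x k]
  have hx' : |x| = 4 / 5 * (Pdef k bk B / 2) := hx.trans (by ring)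
  calc |bk * y| ≤ |bk| * (25 / 16 * |x| ^ k) := by rw [abs_mul]; gcongr
    _ = 25 / 16 * ((4 / 5) ^ k * B) := by
        rw [mul_left_comm, hx', abs_mul_mul_Pdef_div_two_pow (by lia) hbk hB.le]
    _ ≤ 25 / 16 * ((4 / 5) ^ 3 * B) := by
        gcongr 25 / 16 * (?_ * B)
        exact pow_le_pow_of_le_one (by norm_num) (by norm_num) hk
    _ = 4 / 5 * B := by ring

theorem le_abs_mul_of_abs_sub_pow_le (hk : 3 ≤ k) (hbk : bk ≠ 0) (hB : 0 < B)
    (hC : C ≤ (3 / 10 * Pdef k bk B) ^ 2) (hx : 3 * Pdef k bk B / 5 ≤ |x|)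
    (hy : |y - x ^ k| ≤ C * |x| ^ (k - 2)) : 6 / 5 * B ≤ |bk * y| := by
  have hP : 0 < Pdef k bk B := Pdef_pos hbk hB
  have hCx : C ≤ 1 / 4 * |x| ^ 2 :=
    calc C ≤ 1 / 4 * (3 * Pdef k bk B / 5) ^ 2 := hC.trans_eq (by ring)
      _ ≤ 1 / 4 * |x| ^ 2 := by gcongr
  have hclose : |y - x ^ k| ≤ 1 / 4 * |x| ^ k := abs_sub_pow_le_mul_abs_pow (by lia) hCx hy
  have hyx : 3 / 4 * |x| ^ k ≤ |y| := by
    linarith [abs_sub_abs_le_abs_sub (x ^ k) y, abs_sub_comm (x ^ k) y, abs_pow x k]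
  calc 6 / 5 * B ≤ 3 / 4 * ((6 / 5) ^ 3 * B) := by linarith
    _ ≤ 3 / 4 * ((6 / 5) ^ k * B) := by
        gcongr 3 / 4 * (?_ * B)
        exact pow_le_pow_right₀ (by norm_num) hk
    _ = 3 / 4 * (|bk| * (6 / 5 * (Pdef k bk B / 2)) ^ k) := by
        rw [abs_mul_mul_Pdef_div_two_pow (by lia) hbk hB.le]
    _ ≤ 3 / 4 * (|bk| * |x| ^ k) := by gcongr; linarith
    _ ≤ |bk * y| := by
        rw [abs_mul, mul_left_comm]
        gcongr

end InterfaceBounds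

theorem six_le_of_orthogonal_of_abs_eval_sub_pow_le {k : ℕ} (hk : 3 ≤ k) {h : Polynomial ℝ}
    (hmonic : h.Monic) (hdeg : h.natDegree = k)
    (horth : ∀ j : ℕ, j < k → ∫ σ : ℝ, σ ^ j * h.eval σ * Real.exp (-σ ^ 2 / 4) = 0)
    {c : ℝ} (hc : ∀ σ : ℝ, 1 ≤ |σ| → |h.eval σ - σ ^ k| ≤ c * |σ| ^ (k - 2)) : 6 ≤ c := by
  obtain ⟨n, rfl⟩ := Nat.exists_eq_add_of_le' (show 2 ≤ k by lia)
  have hb : (0 : ℝ) < 1 / 4 := by norm_num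
  have horth' : ∀ j < n + 2, gaussianIntegral hb (Polynomial.X ^ j * h) = 0 := fun j hj => by
    rw [gaussianIntegral_apply, ← horth j hj]
    refine integral_congr_ae (.of_forall fun σ => ?_)
    simp only [Polynomial.eval_mul, Polynomial.eval_pow, Polynomial.eval_X]
    rw [neg_mul, one_div_mul_eq_div, neg_div]
  have hc' : ∀ᶠ σ in atTop, |h.eval σ - σ ^ (n + 2)| ≤ c * σ ^ n := by
    filter_upwards [eventually_ge_atTop 1] with σ hσ
    have hσ_abs : |σ| = σ := abs_of_nonneg (zero_le_one.trans hσ)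
    simpa only [hσ_abs, Nat.add_sub_cancel] using hc σ (hσ.trans_eq hσ_abs.symm)
  have hle := le_four_mul_of_orthogonal_of_abs_eval_sub_pow_le hb hmonic hdeg horth' hc'
  have hn : (1 : ℝ) ≤ n := by exact_mod_cast (show 1 ≤ n by lia)
  nlinarith

theorem exists_forall_abs_sub_mul_eval_lt {P δ : ℝ} (hP : 0 < P) (hδ : 0 < δ) (W : NNReal)
    (bk : ℝ) (h : Polynomial ℝ) :
    ∃ ε₀ : ℝ, 0 < ε₀ ∧ ∀ ε : ℝ, 0 < ε → ε < ε₀ →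
      ∀ f : ℝ → ℝ, LipschitzOnWith W f (Icc (-P) P) →
        (∫ σ in (-P)..P, (f σ - bk * h.eval σ) ^ 2 * Real.exp (-σ ^ 2 / 4)) ≤ 9 * ε ^ 2 →
        ∀ σ : ℝ, |σ| ≤ P → |f σ - bk * h.eval σ| < δ := by
  have hmodel : ContDiff ℝ 1 fun σ => bk * h.eval σ :=
    contDiff_const.mul (Polynomial.contDiff_aeval h 1)
  obtain ⟨M, hM⟩ :=
    hmodel.contDiffOn.exists_lipschitzOnWith one_ne_zero (convex_Icc (-P) P) isCompact_Icc
  have hweight : Continuous fun σ : ℝ => Real.exp (-σ ^ 2 / 4) := by fun_prop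
  obtain ⟨η, hη, hsmall⟩ := exists_forall_abs_lt_of_integral_sq_mul_lt (neg_lt_self hP)
    hweight.continuousOn (fun σ _ => Real.exp_pos _) (W + M) hδ
  refine ⟨√η / 3, by positivity, fun ε hε hε_lt f hf hint σ hσ => ?_⟩
  have hε_sq : 9 * ε ^ 2 < η :=
    calc 9 * ε ^ 2 = (3 * ε) ^ 2 := by ring
      _ < η := (Real.lt_sqrt (by positivity)).1 (by linarith)
  exact hsmall _ (hf.sub hM) (hint.trans_lt hε_sq) σ (abs_le.1 hσ)

theorem stmt12_general (k : ℕ) (hk : 3 ≤ k) (bk : ℝ) (hbk : bk ≠ 0)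
    (h : Polynomial ℝ) (hmonic : h.Monic) (hdeg : h.natDegree = k)
    (horth : ∀ j : ℕ, j < k → ∫ σ : ℝ, σ ^ j * h.eval σ * Real.exp (-σ ^ 2 / 4) = 0)
    (Ck : ℝ) (hCk : ∀ σ : ℝ, 1 ≤ |σ| → |h.eval σ - σ ^ k| ≤ Ck * |σ| ^ (k - 2))
    (B : ℝ) (hB : 0 < B) (hP : (10 / 3) * √Ck ≤ Pdef k bk B) (W : NNReal) :
    ∃ ε₀ : ℝ, 0 < ε₀ ∧ ∀ ε : ℝ, 0 < ε → ε < ε₀ →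
      ∀ f : ℝ → ℝ, LipschitzOnWith W f (Icc (-(Pdef k bk B)) (Pdef k bk B)) →
        (∫ σ in (-(Pdef k bk B))..(Pdef k bk B),
            (f σ - bk * h.eval σ) ^ 2 * Real.exp (-σ ^ 2 / 4)) ≤ 9 * ε ^ 2 →
        |f (2 * Pdef k bk B / 5)| < B ∧
        ∀ σ : ℝ, 3 * Pdef k bk B / 5 ≤ |σ| → |σ| ≤ Pdef k bk B → B < |f σ| := by
  have hP_pos : 0 < Pdef k bk B := Pdef_pos hbk hB
  have hC_le : Ck ≤ (3 / 10 * Pdef k bk B) ^ 2 := (Real.sqrt_le_iff.1 (by linarith)).2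
  have hC_ge : 6 ≤ Ck := six_le_of_orthogonal_of_abs_eval_sub_pow_le hk hmonic hdeg horth hCk
  have hP_ge : 5 / 2 ≤ Pdef k bk B := by nlinarith
  obtain ⟨ε₀, hε₀, hclose⟩ :=
    exists_forall_abs_sub_mul_eval_lt hP_pos (show 0 < B / 5 by positivity) W bk h
  refine ⟨ε₀, hε₀, fun ε hε hε_lt f hf hint => ?_⟩
  have hf_close := hclose ε hε hε_lt f hf hint
  constructor
  · have habs : |2 * Pdef k bk B / 5| = 2 * Pdef k bk B / 5 := abs_of_pos (by positivity)
    have hmodel : |bk * h.eval (2 * Pdef k bk B / 5)| ≤ 4 / 5 * B :=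
      abs_mul_le_of_abs_sub_pow_le hk hbk hB hC_le habs (hCk _ (by linarith))
    linarith [hf_close (2 * Pdef k bk B / 5) (by linarith),
      abs_sub_abs_le_abs_sub (f (2 * Pdef k bk B / 5)) (bk * h.eval (2 * Pdef k bk B / 5))]
  · intro σ hσ hσP
    have hmodel : 6 / 5 * B ≤ |bk * h.eval σ| :=
      le_abs_mul_of_abs_sub_pow_le hk hbk hB hC_le hσ (hCk σ (by linarith))
    linarith [hf_close σ hσP, abs_sub_abs_le_abs_sub (bk * h.eval σ) (f σ),
      abs_sub_comm (bk * h.eval σ) (f σ)]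

/-- pointwise control at the parabolic–intermediate interface for
functions `f` (playing the role of `e^{μ_k τ} v(·,τ)`) that are `L²`-close to
`b_k h_k` and have `C¹` norm at most `W`. -/
theorem stmt12 (k : ℕ) (hk : 3 ≤ k) (bk : ℝ) (hbk : bk < 0)
    (h : Polynomial ℝ) (hmonic : h.Monic) (hdeg : h.natDegree = k)
    (horth : ∀ j : ℕ, j < k →
      ∫ σ : ℝ, σ^j * h.eval σ * Real.exp (-σ^2/4) = 0)
    (Ck : ℝ) (hCk0 : 0 ≤ Ck)
    (hCk : ∀ σ : ℝ, 1 ≤ |σ| → |h.eval σ - σ^k| ≤ Ck * |σ|^(k-2))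
    (B : ℝ) (hB : 0 < B)
    (hP : (10/3) * Real.sqrt Ck ≤ Pdef k bk B)
    (W : ℝ) (hW : 0 < W) :
    ∃ ε₀ : ℝ, 0 < ε₀ ∧ ∀ ε : ℝ, 0 < ε → ε < ε₀ →
      ∀ f : ℝ → ℝ,
        ContDiffOn ℝ 1 f (Set.Icc (-(Pdef k bk B)) (Pdef k bk B)) →
        (∫ σ in (-(Pdef k bk B))..(Pdef k bk B),
            (f σ - bk * h.eval σ)^2 * Real.exp (-σ^2/4)) ≤ 9 * ε^2 →
        (∀ σ : ℝ, |σ| ≤ Pdef k bk B → |f σ| + |deriv f σ| ≤ W) →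
        |f (2 * Pdef k bk B / 5)| < B ∧
        ∀ σ : ℝ, 3 * Pdef k bk B / 5 ≤ |σ| → |σ| ≤ Pdef k bk B → B < |f σ| := by
  obtain ⟨ε₀, hε₀, hmain⟩ := stmt12_general k hk bk hbk.ne h hmonic hdeg horth Ck hCk B hB hP
    ⟨W, hW.le⟩
  refine ⟨ε₀, hε₀, fun ε hε hε_lt f hf hint hbound => hmain ε hε hε_lt f ?_ hint⟩
  refine lipschitzOnWith_Icc_of_nnnorm_deriv_le hf.continuousOn
    ((hf.differentiableOn one_ne_zero).mono Ioo_subset_Icc_self) fun σ hσ => ?_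
  exact (le_add_of_nonneg_left (abs_nonneg (f σ))).trans
    (hbound σ (abs_le.2 (Ioo_subset_Icc_self hσ)))
end
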